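/- For every α > 0 there is a constant C(α) such that every graph G with maximum degree Δ ≥ 2 and minimum degree δ(G) ≥ α·Δ satisfies χ_CF(G) ≤ C(α)·ln Δ. -/

import Mathlib

/-!
Label every vertex uniformly at random with one of `Δ` labels, keep `k = Θ(log Δ)` of them as
colors and merge all the others into one dummy color. A closed neighborhood has `m` vertices with
`α Δ ≤ m ≤ 2 Δ`, so the number of its vertices carrying a given label is close to a Poisson variable
of mean `x = m / Δ`, which equals `1` with probability `x exp (-x)`, bounded below in terms of `α`.
Comparing the multinomial counts with independent Poisson variables costs a factor of at most
`e m`, hence no kept label is unique in the neighborhood with probability at most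
`e m exp (-k x exp (-x))`, a large negative power of `Δ`. The labels in one neighborhood are
independent of those in all but `(Δ + 1) ^ 2` others, so the Lovász local lemma applies. When `Δ` is
too small for `k` colors to be available, `Δ` is bounded, and a greedy proper coloring will do.
-/

open Finset MeasureTheory
open scoped Nat

section LocalLemma

variable {Ω ι : Type*} [MeasurableSpace Ω] {μ : Measure Ω} [IsFiniteMeasure μ]
  {A : ι → Set Ω} {Γ : ι → Finset ι} {d : ℕ} {p : ℝ}

theorem measureReal_biInter_compl_le_add_sum [DecidableEq ι] (A : ι → Set Ω) (S T : Finset ι) :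
    μ.real (⋂ j ∈ T, (A j)ᶜ) ≤
      μ.real (⋂ j ∈ S, (A j)ᶜ) + ∑ j ∈ S \ T, μ.real (A j ∩ ⋂ j ∈ T, (A j)ᶜ) := by
  have hcover : ⋂ j ∈ T, (A j)ᶜ ⊆
      (⋂ j ∈ S, (A j)ᶜ) ∪ ⋃ j ∈ S \ T, A j ∩ ⋂ j ∈ T, (A j)ᶜ := by
    intro ω hω
    by_cases hωS : ω ∈ ⋂ j ∈ S, (A j)ᶜ
    · exact Or.inl hωS
    · obtain ⟨j, hjS, hωj⟩ : ∃ j ∈ S, ω ∈ A j := by simpa using hωS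
      have hjT : j ∉ T := fun hjT => Set.mem_iInter₂.mp hω j hjT hωj
      exact Or.inr (Set.mem_biUnion (mem_sdiff.mpr ⟨hjS, hjT⟩) ⟨hωj, hω⟩)
  calc μ.real (⋂ j ∈ T, (A j)ᶜ)
      ≤ μ.real ((⋂ j ∈ S, (A j)ᶜ) ∪ ⋃ j ∈ S \ T, A j ∩ ⋂ j ∈ T, (A j)ᶜ) :=
        measureReal_mono hcover
    _ ≤ _ := (measureReal_union_le _ _).trans
        (add_le_add_right (measureReal_biUnion_finset_le _ _) _)

theorem measureReal_inter_biInter_compl_le_two_mul (hp : 0 ≤ p) (hΓ : ∀ i, #(Γ i) ≤ d)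
    (hA : ∀ i (S : Finset ι), Disjoint S (Γ i) →
      μ.real (A i ∩ ⋂ j ∈ S, (A j)ᶜ) ≤ p * μ.real (⋂ j ∈ S, (A j)ᶜ))
    (hpd : 4 * p * d ≤ 1) (i : ι) (S : Finset ι) :
    μ.real (A i ∩ ⋂ j ∈ S, (A j)ᶜ) ≤ 2 * p * μ.real (⋂ j ∈ S, (A j)ᶜ) := by
  classical
  induction S using Finset.strongInduction generalizing i with
  | H S ih =>
    set T := S \ Γ i with hT
    have hTS : T ⊆ S := sdiff_subset
    have hcard : #(S \ T) ≤ d := by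
      rw [hT, sdiff_sdiff_right_self]
      exact (card_le_card inter_subset_right).trans (hΓ i)
    have hsum : ∑ j ∈ S \ T, μ.real (A j ∩ ⋂ j ∈ T, (A j)ᶜ) ≤
        d * (2 * p * μ.real (⋂ j ∈ T, (A j)ᶜ)) := by
      refine (sum_le_card_nsmul _ _ (2 * p * μ.real (⋂ j ∈ T, (A j)ᶜ)) fun j hj =>
        ih T (hTS.ssubset_of_mem_notMem (mem_sdiff.mp hj).1 (mem_sdiff.mp hj).2) j).trans ?_
      rw [nsmul_eq_mul]
      gcongr
    have hhalf : d * (2 * p * μ.real (⋂ j ∈ T, (A j)ᶜ)) ≤ μ.real (⋂ j ∈ T, (A j)ᶜ) / 2 := by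
      linarith [mul_le_mul_of_nonneg_right hpd (measureReal_nonneg (μ := μ)
        (s := ⋂ j ∈ T, (A j)ᶜ))]
    have hdouble : μ.real (⋂ j ∈ T, (A j)ᶜ) ≤ 2 * μ.real (⋂ j ∈ S, (A j)ᶜ) := by
      linarith [measureReal_biInter_compl_le_add_sum (μ := μ) A S T]
    calc μ.real (A i ∩ ⋂ j ∈ S, (A j)ᶜ)
        ≤ μ.real (A i ∩ ⋂ j ∈ T, (A j)ᶜ) :=
          measureReal_mono (Set.inter_subset_inter_right _ (Set.biInter_subset_biInter_left hTS))
      _ ≤ p * μ.real (⋂ j ∈ T, (A j)ᶜ) := hA i T sdiff_disjoint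
      _ ≤ p * (2 * μ.real (⋂ j ∈ S, (A j)ᶜ)) := by gcongr
      _ = _ := by ring

/-- The lopsided Lovász local lemma: outside `Γ i`, events may depend on `A i`, as long as avoiding
them does not push the conditional probability of `A i` above `p`. -/
theorem measureReal_biInter_compl_pos_of_lopsided [NeZero μ] (hp : 0 ≤ p) (hd : 0 < d)
    (hΓ : ∀ i, #(Γ i) ≤ d)
    (hA : ∀ i (S : Finset ι), Disjoint S (Γ i) →
      μ.real (A i ∩ ⋂ j ∈ S, (A j)ᶜ) ≤ p * μ.real (⋂ j ∈ S, (A j)ᶜ))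
    (hpd : 4 * p * d ≤ 1) (S : Finset ι) :
    0 < μ.real (⋂ j ∈ S, (A j)ᶜ) := by
  classical
  have hp4 : 4 * p ≤ 1 :=
    (le_mul_of_one_le_right (by positivity) (by exact_mod_cast hd)).trans hpd
  induction S using Finset.induction_on with
  | empty => simp
  | insert i S hi ih =>
    have hunion := measureReal_biInter_compl_le_add_sum (μ := μ) A (insert i S) S
    rw [insert_sdiff_cancel hi, sum_singleton] at hunion
    have hhalf : μ.real (A i ∩ ⋂ j ∈ S, (A j)ᶜ) ≤ μ.real (⋂ j ∈ S, (A j)ᶜ) / 2 := by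
      linarith [measureReal_inter_biInter_compl_le_two_mul hp hΓ hA hpd i S,
        mul_le_mul_of_nonneg_right hp4 ih.le]
    linarith

end LocalLemma

section RandomFunction

variable {V : Type*} [Fintype V] [DecidableEq V] {L : V → Type*} [∀ v, Fintype (L v)]

/-- Swapping the coordinates in `s` between two functions proves independence by counting. -/
theorem card_filter_and_mul_card_of_dependsOn {s : Finset V} {P Q : (∀ v, L v) → Prop}
    [DecidablePred P] [DecidablePred Q] (hP : DependsOn P s) (hQ : DependsOn Q (sᶜ : Finset V)) :
    #{f | P f ∧ Q f} * Fintype.card (∀ v, L v) = #{f | P f} * #{f | Q f} := by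
  let swap (x : (∀ v, L v) × (∀ v, L v)) := (s.piecewise x.1 x.2, s.piecewise x.2 x.1)
  have swap_swap (x) : swap (swap x) = x := by ext v <;> by_cases hv : v ∈ s <;> simp [swap, hv]
  have hP_swap (f g) : P (s.piecewise f g) = P f := hP fun v hv => piecewise_eq_of_mem _ _ _ hv
  have hQ_swap (f g) : Q (s.piecewise f g) = Q g :=
    hQ fun v hv => piecewise_eq_of_notMem _ _ _ (mem_compl.mp hv)
  rw [← card_univ, ← card_product, ← card_product]
  refine card_nbij' swap swap ?_ ?_ (fun x _ => swap_swap x) (fun x _ => swap_swap x) <;>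
  · rintro ⟨f, g⟩
    simp [swap, hP_swap, hQ_swap]

theorem exists_forall_not_of_dependsOn [∀ v, Nonempty (L v)] {ι : Type*} [Fintype ι]
    {E : ι → Finset V} {A : ι → (∀ v, L v) → Prop} [∀ i, DecidablePred (A i)] {d : ℕ} {p : ℝ}
    (hA : ∀ i, DependsOn (A i) (E i)) (hp : 0 ≤ p) (hd : 0 < d)
    (hE : ∀ i, #{j | ¬Disjoint (E i) (E j)} ≤ d)
    (hprob : ∀ i, (#{f | A i f} : ℝ) ≤ p * Fintype.card (∀ v, L v)) (hpd : 4 * p * d ≤ 1) :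
    ∃ f, ∀ i, ¬A i f := by
  classical
  let : MeasurableSpace (∀ v, L v) := ⊤
  have count_real (P : (∀ v, L v) → Prop) [DecidablePred P] :
      Measure.count.real {f | P f} = #{f | P f} := by
    rw [Measure.real, ← coe_filter_univ, Measure.count_apply_finset, ENNReal.toReal_natCast]
  have hN : (0 : ℝ) < Fintype.card (∀ v, L v) := by exact_mod_cast Fintype.card_pos
  have hindep (i) (S : Finset ι) (hS : Disjoint S ({j | ¬Disjoint (E i) (E j)} : Finset ι)) :
      Measure.count.real ({f | A i f} ∩ ⋂ j ∈ S, {f | A j f}ᶜ) ≤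
        p * Measure.count.real (⋂ j ∈ S, {f | A j f}ᶜ) := by
    have hSc : DependsOn (fun f => ∀ j ∈ S, ¬A j f) ((E i)ᶜ : Finset V) := fun f g hfg => by
      refine propext (forall₂_congr fun j hj => not_congr (hA j fun v hv => hfg v ?_).to_iff)
      have hij : Disjoint (E i) (E j) := by simpa using disjoint_left.mp hS hj
      exact_mod_cast mem_compl.mpr (disjoint_right.mp hij hv)
    have hmul := card_filter_and_mul_card_of_dependsOn (hA i) hSc
    have hset : ⋂ j ∈ S, {f | A j f}ᶜ = {f | ∀ j ∈ S, ¬A j f} := by ext; simp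
    rw [hset, ← Set.ofPred_and, count_real, count_real]
    refine le_of_mul_le_mul_right ?_ hN
    calc (#{f | A i f ∧ ∀ j ∈ S, ¬A j f} : ℝ) * Fintype.card (∀ v, L v)
        = #{f | A i f} * #{f | ∀ j ∈ S, ¬A j f} := by exact_mod_cast hmul
      _ ≤ p * Fintype.card (∀ v, L v) * #{f | ∀ j ∈ S, ¬A j f} := by gcongr; exact hprob i
      _ = _ := by ring
  have hpos := measureReal_biInter_compl_pos_of_lopsided hp hd hE hindep hpd univ
  obtain ⟨f, hf⟩ := nonempty_of_measureReal_ne_zero hpos.ne'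
  exact ⟨f, fun i => Set.mem_iInter₂.mp hf i (mem_univ i)⟩

end RandomFunction

section Poissonization

theorem multinomial_eq_factorial_div_pow_mul_prod {L : Type*} (s : Finset L) (n : L → ℕ) {x : ℝ}
    (hx : x ≠ 0) :
    (Nat.multinomial s n : ℝ) =
      (∑ a ∈ s, n a)! / x ^ (∑ a ∈ s, n a) * ∏ a ∈ s, x ^ n a / ((n a)! : ℝ) := by
  have hspec : (∏ a ∈ s, ((n a)! : ℝ)) * Nat.multinomial s n = (∑ a ∈ s, n a)! := by
    exact_mod_cast Nat.multinomial_spec s n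
  have hprod : ∏ a ∈ s, ((n a)! : ℝ) ≠ 0 := prod_ne_zero_iff.mpr fun a _ => by positivity
  rw [prod_div_distrib, prod_pow_eq_pow_sum, ← hspec]
  field_simp

variable {V L : Type*} [Fintype V] [DecidableEq V] [Fintype L] [DecidableEq L]

open MvPolynomial in
/-- Both sides are a coefficient of `(∑ a, 1) ^ #Dᶜ * (∑ a, X a) ^ #D`. -/
theorem card_filter_card_fiber_eq_multinomial (D : Finset V) {n : L → ℕ} (hn : ∑ a, n a = #D) :
    #{f : V → L | ∀ a, #{u ∈ D | f u = a} = n a} =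
      Nat.multinomial univ n * Fintype.card L ^ #Dᶜ := by
  let e : L →₀ ℕ := Finsupp.equivFunOnFinite.symm n
  have hexpand : C (Fintype.card L ^ #Dᶜ) * (∑ a, X a : MvPolynomial L ℕ) ^ #D =
      ∑ f : V → L, ∏ u ∈ D, X (f u) := by
    calc C (Fintype.card L ^ #Dᶜ) * (∑ a, X a : MvPolynomial L ℕ) ^ #D
        = ∏ u, if u ∈ D then ∑ a, X a else C (Fintype.card L) := by
          rw [prod_ite, prod_const, prod_const, filter_mem_eq_inter, univ_inter,
            filter_notMem_eq_sdiff, ← compl_eq_univ_sdiff, map_pow, mul_comm]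
      _ = ∏ u, ∑ a, if u ∈ D then X a else 1 :=
          prod_congr rfl fun u _ => by split_ifs <;> simp
      _ = ∑ f : V → L, ∏ u ∈ D, X (f u) := by
          simp only [prod_univ_sum, Fintype.piFinset_univ, prod_ite_mem, univ_inter]
  have hmonomial (f : V → L) : coeff e (∏ u ∈ D, X (f u) : MvPolynomial L ℕ) =
      if ∀ a, #{u ∈ D | f u = a} = n a then 1 else 0 := by
    have hfiber : ∏ u ∈ D, (X (f u) : MvPolynomial L ℕ) = ∏ a, X a ^ #{u ∈ D | f u = a} := by
      simp only [← prod_fiberwise' D f, prod_const]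
    rw [hfiber, coeff_prod_X_pow]
    refine if_congr ?_ rfl rfl
    simp [e, Finsupp.ext_iff, eq_comm]
  have he : e.sum (fun _ m => m) = #D := by
    rw [Finsupp.sum_fintype _ _ fun _ => rfl]
    exact hn
  calc #{f : V → L | ∀ a, #{u ∈ D | f u = a} = n a}
      = coeff e (∑ f : V → L, ∏ u ∈ D, X (f u) : MvPolynomial L ℕ) := by
        rw [coeff_sum, sum_congr rfl fun f _ => hmonomial f, card_filter]
    _ = e.multinomial * Fintype.card L ^ #Dᶜ := by
        rw [← hexpand, coeff_C_mul, coeff_sum_X_pow_of_fintype, if_pos he, mul_comm]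
        rfl
    _ = Nat.multinomial univ n * Fintype.card L ^ #Dᶜ := by
        rw [Finsupp.multinomial_eq_of_support_subset (subset_univ _)]
        rfl

/-- Up to the factor `m! / x ^ m` and the powers of `exp x` that normalize the Poisson law, the
fiber sizes of a random function behave like independent Poisson variables of mean `x`. -/
theorem card_filter_forall_card_fiber_le (D : Finset V) (P : L → ℕ → Prop)
    [∀ a, DecidablePred (P a)] {x : ℝ} (hx : 0 < x) :
    (#{f : V → L | ∀ a, P a #{u ∈ D | f u = a}} : ℝ) ≤
      (#D)! / x ^ #D * (∏ a, ∑ j ∈ range (#D + 1) with P a j, x ^ j / (j ! : ℝ)) *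
        Fintype.card L ^ #Dᶜ := by
  set m := #D
  have hsum_fiber (f : V → L) : ∑ a, #{u ∈ D | f u = a} = m :=
    (card_eq_sum_card_fiberwise (f := f) fun _ _ => mem_univ _).symm
  have hcount : #{f : V → L | ∀ a, P a #{u ∈ D | f u = a}} =
      ∑ n ∈ piAntidiag univ m with ∀ a, P a (n a),
        Nat.multinomial univ n * Fintype.card L ^ #Dᶜ := by
    rw [card_eq_sum_card_fiberwise (f := fun (f : V → L) a => #{u ∈ D | f u = a})
      (t := {n ∈ piAntidiag univ m | ∀ a, P a (n a)})]
    · refine sum_congr rfl fun n hn => ?_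
      simp only [mem_filter, mem_piAntidiag] at hn
      rw [← card_filter_card_fiber_eq_multinomial D hn.1.1]
      congr 1
      ext f
      simp only [mem_filter, mem_univ, true_and, funext_iff, and_iff_right_iff_imp]
      exact fun hf a => by rw [hf a]; exact hn.2 a
    · intro f hf
      simpa [hsum_fiber f] using hf
  have hsubset : {n ∈ piAntidiag (univ : Finset L) m | ∀ a, P a (n a)} ⊆
      Fintype.piFinset fun a => {j ∈ range (m + 1) | P a j} := by
    intro n hn
    simp only [mem_filter, mem_piAntidiag, Fintype.mem_piFinset, mem_range] at hn ⊢
    exact fun a => ⟨Nat.lt_succ_of_le (hn.1.1 ▸ single_le_sum_of_canonicallyOrdered (mem_univ a)),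
      hn.2 a⟩
  rw [hcount, ← sum_mul, prod_univ_sum]
  push_cast
  gcongr
  calc ∑ n ∈ piAntidiag univ m with ∀ a, P a (n a), (Nat.multinomial univ n : ℝ)
      = m ! / x ^ m * ∑ n ∈ piAntidiag univ m with ∀ a, P a (n a), ∏ a, x ^ n a / (n a)! := by
        rw [mul_sum]
        refine sum_congr rfl fun n hn => ?_
        rw [multinomial_eq_factorial_div_pow_mul_prod univ n hx.ne',
          (mem_piAntidiag.mp (mem_filter.mp hn).1).1]
    _ ≤ _ := by gcongr

theorem sum_range_pow_div_factorial_ne_one_le {x : ℝ} (hx : 0 ≤ x) (n : ℕ) :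
    ∑ j ∈ range n with j ≠ 1, x ^ j / (j ! : ℝ) ≤ Real.exp (x - x * Real.exp (-x)) := by
  calc ∑ j ∈ range n with j ≠ 1, x ^ j / (j ! : ℝ)
      ≤ ∑ j ∈ (range (n + 2)).erase 1, x ^ j / (j ! : ℝ) := by
        refine sum_le_sum_of_subset_of_nonneg (fun j hj => ?_) fun _ _ _ => by positivity
        simp only [mem_filter, mem_erase, mem_range] at hj ⊢
        lia
    _ = ∑ j ∈ range (n + 2), x ^ j / (j ! : ℝ) - x := by
        rw [← sum_erase_add (range (n + 2)) _ (by simp : 1 ∈ range (n + 2))]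
        simp
    _ ≤ Real.exp x - x := by gcongr; exact Real.sum_le_exp_of_nonneg hx _
    _ = Real.exp x * (1 - x * Real.exp (-x)) := by rw [Real.exp_neg]; field_simp
    _ ≤ Real.exp x * Real.exp (-(x * Real.exp (-x))) := by
        gcongr
        exact Real.one_sub_le_exp_neg _
    _ = Real.exp (x - x * Real.exp (-x)) := by rw [← Real.exp_add, sub_eq_add_neg]

theorem factorial_mul_exp_le {n : ℕ} (hn : 1 ≤ n) :
    (n ! : ℝ) * Real.exp n ≤ Real.exp 1 * n * n ^ n := by
  induction n, hn using Nat.le_induction with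
  | base => simp
  | succ n hn ih =>
    have : (n : ℝ) ≠ 0 := by positivity
    have hstep : Real.exp 1 * (n : ℝ) ^ (n + 1) ≤ ((n + 1 : ℕ) : ℝ) ^ (n + 1) := by
      have h := Real.one_sub_div_pow_le_exp_neg (n := n + 1) (t := 1) (by simp)
      have hfrac : 1 - 1 / ((n + 1 : ℕ) : ℝ) = n / (n + 1 : ℕ) := by
        push_cast
        field_simp
        ring
      rw [hfrac, div_pow, Real.exp_neg, div_le_iff₀ (by positivity), inv_mul_eq_div,
        le_div_iff₀ (by positivity)] at h
      linarith
    calc ((n + 1)! : ℝ) * Real.exp (n + 1 : ℕ)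
        = (n + 1 : ℕ) * Real.exp 1 * (n ! * Real.exp n) := by
          rw [Nat.factorial_succ, Nat.cast_mul, Nat.cast_succ, Real.exp_add]
          ring
      _ ≤ (n + 1 : ℕ) * Real.exp 1 * (Real.exp 1 * n * n ^ n) := by gcongr
      _ = Real.exp 1 * (n + 1 : ℕ) * (Real.exp 1 * n ^ (n + 1)) := by ring
      _ ≤ Real.exp 1 * (n + 1 : ℕ) * (n + 1 : ℕ) ^ (n + 1) := by gcongr

theorem card_filter_forall_card_fiber_ne_one_le [Nonempty L] {D : Finset V} (hD : D.Nonempty)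
    (K : Finset L) {x : ℝ} (hx : x = #D / Fintype.card L) :
    (#{f : V → L | ∀ a ∈ K, #{u ∈ D | f u = a} ≠ 1} : ℝ) ≤
      Real.exp 1 * #D * Real.exp (-(#K * (x * Real.exp (-x)))) * Fintype.card (V → L) := by
  set m := #D
  set M := Fintype.card L with hM_def
  have hm : 1 ≤ m := hD.card_pos
  have hM : (0 : ℝ) < M := by exact_mod_cast Fintype.card_pos
  have hx0 : 0 < x := by rw [hx]; positivity
  have hfactor (a : L) : ∑ j ∈ range (m + 1) with (a ∈ K → j ≠ 1), x ^ j / (j ! : ℝ) ≤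
      Real.exp (x - if a ∈ K then x * Real.exp (-x) else 0) := by
    by_cases ha : a ∈ K
    · simpa [ha] using sum_range_pow_div_factorial_ne_one_le hx0.le (m + 1)
    · simpa [ha] using Real.sum_le_exp_of_nonneg hx0.le (m + 1)
  have hprod : ∏ a, ∑ j ∈ range (m + 1) with (a ∈ K → j ≠ 1), x ^ j / (j ! : ℝ) ≤
      Real.exp m * Real.exp (-(#K * (x * Real.exp (-x)))) := by
    calc _ ≤ ∏ a, Real.exp (x - if a ∈ K then x * Real.exp (-x) else 0) :=
          prod_le_prod (fun a _ => sum_nonneg fun j _ => by positivity) fun a _ => hfactor a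
      _ = Real.exp (M * x - #K * (x * Real.exp (-x))) := by
          rw [← Real.exp_sum, sum_sub_distrib, sum_ite_mem, univ_inter]
          simp [hM_def]
      _ = _ := by rw [sub_eq_add_neg, Real.exp_add, hx, mul_div_cancel₀ _ hM.ne']
  have hcard : (Fintype.card (V → L) : ℝ) = M ^ m * M ^ #Dᶜ := by
    rw [← pow_add, card_add_card_compl, Fintype.card_fun]
    norm_cast
  have hpow : x ^ m = m ^ m / M ^ m := by rw [hx, div_pow]
  calc (#{f : V → L | ∀ a ∈ K, #{u ∈ D | f u = a} ≠ 1} : ℝ)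
      ≤ m ! / x ^ m * (∏ a, ∑ j ∈ range (m + 1) with (a ∈ K → j ≠ 1), x ^ j / (j ! : ℝ)) *
          M ^ #Dᶜ :=
        card_filter_forall_card_fiber_le D (fun a j => a ∈ K → j ≠ 1) hx0
    _ ≤ m ! / x ^ m * (Real.exp m * Real.exp (-(#K * (x * Real.exp (-x))))) * M ^ #Dᶜ := by
        gcongr
    _ = m ! * Real.exp m / m ^ m * Real.exp (-(#K * (x * Real.exp (-x)))) *
          Fintype.card (V → L) := by
        rw [hcard, hpow]
        field_simp
    _ ≤ Real.exp 1 * m * Real.exp (-(#K * (x * Real.exp (-x)))) * Fintype.card (V → L) := by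
        gcongr
        exact div_le_of_le_mul₀ (by positivity) (by positivity) (factorial_mul_exp_le hm)

end Poissonization

section ConflictFree

variable {V ι : Type*}

/-- `c` is a conflict-free coloring of the hypergraph with edges `E i`: some color occurs exactly
once in each edge. Conflict-free colorings of a graph, with respect to closed neighborhoods, are
obtained for the edges `insert v (G.neighborSet v)`. -/
def IsConflictFree {L : Type*} (E : ι → Set V) (c : V → L) : Prop :=
  ∀ i, ∃ a, ∃! v, v ∈ E i ∧ c v = a

theorem isConflictFree_min {E : ι → Set V} {f : V → ℕ} {k : ℕ}
    (hf : ∀ i, ∃ a < k, ∃! v, v ∈ E i ∧ f v = a) :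
    IsConflictFree E fun v => (⟨min (f v) k, by lia⟩ : Fin (k + 1)) := by
  intro i
  obtain ⟨a, hak, ha⟩ := hf i
  refine ⟨⟨a, by lia⟩, (existsUnique_congr fun v => and_congr_right fun _ => ?_).mp ha⟩
  rw [Fin.mk.injEq]
  lia

theorem isConflictFree_of_coloring {G : SimpleGraph V} {L : Type*} (c : G.Coloring L) :
    IsConflictFree (fun v => insert v (G.neighborSet v)) c := by
  refine fun v => ⟨c v, v, ⟨Set.mem_insert _ _, rfl⟩, ?_⟩
  rintro w ⟨rfl | hvw, hcw⟩
  · rfl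
  · exact (c.valid hvw hcw.symm).elim

variable [Finite V] [DecidableEq V] [Fintype ι] {E : ι → Finset V} {d : ℕ} {α β : ℝ}

theorem exists_forall_existsUnique_mem_of_card_le {L : Type*} [Fintype L] [Nonempty L]
    (K : Finset L) (hα : 0 < α) (hE_lower : ∀ i, α * Fintype.card L ≤ #(E i))
    (hE_upper : ∀ i, #(E i) ≤ β * Fintype.card L) (hβ : 0 ≤ β) (hd : 0 < d)
    (hE_meet : ∀ i, #{j | ¬Disjoint (E i) (E j)} ≤ d)
    (hprob : 4 * (Real.exp 1 * (β * Fintype.card L) *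
      Real.exp (-(#K * (α * Real.exp (-β))))) * d ≤ 1) :
    ∃ f : V → L, ∀ i, ∃ a ∈ K, ∃! u, u ∈ E i ∧ f u = a := by
  classical
  cases nonempty_fintype V
  have hL : (0 : ℝ) < Fintype.card L := by exact_mod_cast Fintype.card_pos
  have hlocal (i) : DependsOn (fun f : V → L => ∀ a ∈ K, #{u ∈ E i | f u = a} ≠ 1) (E i) :=
    fun f g hfg => by
      have hfilter (a) : {u ∈ E i | f u = a} = {u ∈ E i | g u = a} :=
        filter_congr fun u hu => by rw [hfg u hu]
      simp only [hfilter]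
  have hfail (i) : (#{f : V → L | ∀ a ∈ K, #{u ∈ E i | f u = a} ≠ 1} : ℝ) ≤
      Real.exp 1 * (β * Fintype.card L) * Real.exp (-(#K * (α * Real.exp (-β)))) *
        Fintype.card (V → L) := by
    have hne : (E i).Nonempty := by
      have : 0 < α * Fintype.card L := by positivity
      exact card_pos.mp (by exact_mod_cast this.trans_le (hE_lower i))
    refine (card_filter_forall_card_fiber_ne_one_le hne K rfl).trans ?_
    have hα_le : α ≤ #(E i) / Fintype.card L := (le_div_iff₀ hL).mpr (hE_lower i)
    have hle_β : #(E i) / Fintype.card L ≤ β := (div_le_iff₀ hL).mpr (hE_upper i)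
    gcongr
    exact hE_upper i
  obtain ⟨f, hf⟩ := exists_forall_not_of_dependsOn hlocal (by positivity) hd hE_meet hfail hprob
  refine ⟨f, fun i => ?_⟩
  obtain ⟨a, haK, ha⟩ : ∃ a ∈ K, #{u ∈ E i | f u = a} = 1 := by simpa using hf i
  exact ⟨a, haK, by simpa only [mem_filter] using card_eq_one_iff_existsUnique.mp ha⟩

theorem exists_isConflictFree_of_card_le {M k : ℕ}
    (hα : 0 < α) (hM : 0 < M) (hkM : k ≤ M) (hE_lower : ∀ i, α * M ≤ #(E i))
    (hE_upper : ∀ i, #(E i) ≤ β * M) (hβ : 0 ≤ β) (hd : 0 < d)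
    (hE_meet : ∀ i, #{j | ¬Disjoint (E i) (E j)} ≤ d)
    (hprob : 4 * (Real.exp 1 * (β * M) * Real.exp (-(k * (α * Real.exp (-β))))) * d ≤ 1) :
    ∃ c : V → Fin (k + 1), IsConflictFree (fun i => (E i : Set V)) c := by
  have : Nonempty (Fin M) := ⟨⟨0, hM⟩⟩
  have hcard : #{a : Fin M | a.val < k} = k := by simp [Fin.card_filter_val_lt, hkM]
  obtain ⟨f, hf⟩ := exists_forall_existsUnique_mem_of_card_le (E := E)
    ({a | a.val < k} : Finset (Fin M)) hα (by simpa using hE_lower) (by simpa using hE_upper)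
    hβ hd hE_meet (by simpa [hcard] using hprob)
  refine ⟨_, isConflictFree_min (f := fun v => (f v).val) fun i => ?_⟩
  obtain ⟨a, hak, ha⟩ := hf i
  exact ⟨a, (mem_filter.mp hak).2, by simpa [Fin.val_inj] using ha⟩

end ConflictFree

section Graph

variable {V : Type*} [Fintype V] (G : SimpleGraph V) [DecidableRel G.Adj]

theorem colorable_maxDegree_add_one : G.Colorable (G.maxDegree + 1) := by
  classical
  have hpartial (s : Finset V) : ∃ c : V → Fin (G.maxDegree + 1),
      ∀ u ∈ s, ∀ w ∈ s, G.Adj u w → c u ≠ c w := by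
    induction s using Finset.induction_on with
    | empty => exact ⟨fun _ => 0, by simp⟩
    | insert v s hv ih =>
      obtain ⟨c, hc⟩ := ih
      obtain ⟨a, ha⟩ : ∃ a, a ∉ (G.neighborFinset v).image c := by
        by_contra! hused
        have hcard := card_le_card fun a (_ : a ∈ univ) => hused a
        rw [card_univ, Fintype.card_fin] at hcard
        have := hcard.trans (card_image_le.trans (G.degree_le_maxDegree v))
        lia
      have hfree (w) (hvw : G.Adj v w) : c w ≠ a := fun hw =>
        ha (mem_image.mpr ⟨w, (G.mem_neighborFinset v w).mpr hvw, hw⟩)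
      have hne (u) (hu : u ∈ s) : u ≠ v := ne_of_mem_of_not_mem hu hv
      refine ⟨Function.update c v a, fun u hu w hw huw => ?_⟩
      rw [mem_insert] at hu hw
      rcases hu with rfl | hu <;> rcases hw with rfl | hw
      · exact (G.irrefl huw).elim
      · simpa [hne w hw] using (hfree w huw).symm
      · simpa [hne u hu] using hfree u huw.symm
      · simpa [hne u hu, hne w hw] using hc u hu w hw huw
  obtain ⟨c, hc⟩ := hpartial univ
  exact ⟨SimpleGraph.Coloring.mk c fun {u w} => hc u (mem_univ u) w (mem_univ w)⟩

theorem card_closedNeighborhoods_not_disjoint_le [DecidableEq V] (v : V) :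
    #{w | ¬Disjoint (insert v (G.neighborFinset v)) (insert w (G.neighborFinset w))} ≤
      (G.maxDegree + 1) ^ 2 := by
  let N (v : V) : Finset V := insert v (G.neighborFinset v)
  have hcard (v) : #(N v) ≤ G.maxDegree + 1 :=
    (card_insert_le _ _).trans (Nat.succ_le_succ (G.degree_le_maxDegree v))
  have hsymm (u w) (huw : u ∈ N w) : w ∈ N u := by
    simpa [N, eq_comm, G.adj_comm] using huw
  calc #{w | ¬Disjoint (N v) (N w)} ≤ #((N v).biUnion N) := by
        refine card_le_card fun w hw => ?_
        obtain ⟨u, huv, huw⟩ := not_disjoint_iff.mp (mem_filter.mp hw).2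
        exact mem_biUnion.mpr ⟨u, huv, hsymm u w huw⟩
    _ ≤ #(N v) * (G.maxDegree + 1) := card_biUnion_le_card_mul _ _ _ fun u _ => hcard u
    _ ≤ (G.maxDegree + 1) ^ 2 := by rw [sq]; gcongr; exact hcard v

variable {G}

theorem four_mul_exp_neg_mul_sq_le_one {x t : ℝ} (hx : 2 ≤ x) (ht : 10 * Real.log x ≤ t) :
    4 * (Real.exp 1 * (2 * x) * Real.exp (-t)) * (x + 1) ^ 2 ≤ 1 := by
  have hx0 : 0 < x := by linarith
  have hexp : Real.exp (-t) ≤ (x ^ 10)⁻¹ := by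
    calc Real.exp (-t) ≤ Real.exp (-(10 * Real.log x)) := by gcongr
      _ = (x ^ 10)⁻¹ := by
        rw [Real.exp_neg, ← Real.exp_log (pow_pos hx0 10), Real.log_pow, Nat.cast_ofNat]
  calc 4 * (Real.exp 1 * (2 * x) * Real.exp (-t)) * (x + 1) ^ 2
      ≤ 4 * (3 * (2 * x) * (x ^ 10)⁻¹) * (2 * x) ^ 2 := by
        gcongr
        · exact Real.exp_one_lt_three.le
        · linarith
    _ = 96 / x ^ 7 := by field_simp; norm_num
    _ ≤ 96 / 2 ^ 7 := by gcongr
    _ ≤ 1 := by norm_num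

theorem exists_isConflictFree_of_log_le {α : ℝ} {k : ℕ} (hα : 0 < α) (hΔ : 2 ≤ G.maxDegree)
    (hδ : ∀ v, α * G.maxDegree ≤ G.degree v) (hkΔ : k ≤ G.maxDegree)
    (hk : 10 * Real.exp 2 / α * Real.log G.maxDegree ≤ k) :
    ∃ c : V → Fin (k + 1), IsConflictFree (fun v => insert v (G.neighborSet v)) c := by
  classical
  have hΔ' : (2 : ℝ) ≤ G.maxDegree := by exact_mod_cast hΔ
  have hcard (v) : #(insert v (G.neighborFinset v)) = G.degree v + 1 := by
    rw [card_insert_of_notMem (by simp), G.card_neighborFinset_eq_degree]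
  have hexponent : 10 * Real.log G.maxDegree ≤ k * (α * Real.exp (-2)) := by
    calc 10 * Real.log G.maxDegree
        = 10 * Real.exp 2 / α * Real.log G.maxDegree * (α * Real.exp (-2)) := by
          rw [Real.exp_neg]; field_simp
      _ ≤ k * (α * Real.exp (-2)) := by gcongr
  have hlower (v) : α * G.maxDegree ≤ #(insert v (G.neighborFinset v)) := by
    rw [hcard]
    exact (hδ v).trans (by exact_mod_cast (G.degree v).le_succ)
  have hupper (v) : (#(insert v (G.neighborFinset v)) : ℝ) ≤ 2 * G.maxDegree := by
    rw [hcard]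
    have := G.degree_le_maxDegree v
    exact_mod_cast (by lia : G.degree v + 1 ≤ 2 * G.maxDegree)
  obtain ⟨c, hc⟩ := exists_isConflictFree_of_card_le hα (by lia) hkΔ hlower hupper zero_le_two
    (by positivity) (card_closedNeighborhoods_not_disjoint_le G)
    (by exact_mod_cast four_mul_exp_neg_mul_sq_le_one hΔ' hexponent)
  exact ⟨c, by simpa using hc⟩

end Graph

theorem natCeil_mul_log_add_one_le {b x : ℝ} (hb : 0 ≤ b) (hx : 2 ≤ x) :
    (⌈b * Real.log x⌉₊ + 1 : ℝ) ≤ (b + 2 / Real.log 2) * Real.log x := by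
  have hlog : Real.log 2 ≤ Real.log x := Real.log_le_log two_pos hx
  have hlog2 : 0 < Real.log 2 := Real.log_pos one_lt_two
  have htwo : 2 ≤ 2 / Real.log 2 * Real.log x := by
    rw [div_mul_eq_mul_div, le_div_iff₀ hlog2]
    gcongr
  linarith [Nat.ceil_lt_add_one (mul_nonneg hb (hlog2.le.trans hlog))]

theorem near_regular_conflict_free_log_bound_general.{u} (α : ℝ) (hα : 0 < α) :
    ∃ C : ℝ, 0 < C ∧ ∀ (V : Type u) [Fintype V] (G : SimpleGraph V) [DecidableRel G.Adj],
      2 ≤ G.maxDegree → (∀ v : V, α * G.maxDegree ≤ G.degree v) →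
      ∃ (n : ℕ) (c : V → Fin n), (n : ℝ) ≤ C * Real.log G.maxDegree ∧
        IsConflictFree (fun v => insert v (G.neighborSet v)) c := by
  have : 0 < Real.log 2 := Real.log_pos one_lt_two
  refine ⟨10 * Real.exp 2 / α + 2 / Real.log 2, by positivity, fun V _ G _ hΔ hδ => ?_⟩
  set k := ⌈10 * Real.exp 2 / α * Real.log G.maxDegree⌉₊
  have hcolors : (k + 1 : ℝ) ≤ (10 * Real.exp 2 / α + 2 / Real.log 2) * Real.log G.maxDegree :=
    natCeil_mul_log_add_one_le (by positivity) (by exact_mod_cast hΔ)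
  rcases le_total G.maxDegree k with hΔk | hkΔ
  · obtain ⟨c⟩ := colorable_maxDegree_add_one G
    refine ⟨G.maxDegree + 1, c, le_trans ?_ hcolors, isConflictFree_of_coloring c⟩
    exact_mod_cast Nat.succ_le_succ hΔk
  · obtain ⟨c, hc⟩ := exists_isConflictFree_of_log_le hα hΔ hδ hkΔ (Nat.le_ceil _)
    exact ⟨k + 1, c, by exact_mod_cast hcolors, hc⟩

/-- For every `α > 0` there is a constant `C(α)` such that every graph with maximum degree
`Δ ≥ 2` and minimum degree at least `α·Δ` has a conflict-free vertex coloring with at most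
`C(α)·ln Δ` colors. -/
theorem near_regular_conflict_free_log_bound (α : ℝ) (hα : 0 < α) :
    ∃ C : ℝ, 0 < C ∧ ∀ (V : Type) [Fintype V] (G : SimpleGraph V) [DecidableRel G.Adj],
      2 ≤ G.maxDegree → (∀ v : V, α * G.maxDegree ≤ G.degree v) →
      ∃ (n : ℕ) (c : V → Fin n),
        (n : ℝ) ≤ C * Real.log G.maxDegree ∧
        ∀ v : V, ∃ a : Fin n, ∃! w : V, w ∈ insert v (G.neighborSet v) ∧ c w = a :=
  near_regular_conflict_free_log_bound_general α hα
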